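/- arXiv:2303.03719 — 4 statements merged into one kernel-verified Lean document; each statement's English description precedes it below -/
import Mathlib

section
/- Let F be a Minkowski norm on ℝ^{n+1} with dual F⁰, and assume F⁰ is differentiable on ℝ^{n+1}∖{0}. Then for every x ≠ 0 and y ≠ 0 one has ∇F(∇F⁰(y)) = y / F⁰(y) and ∇F⁰(∇F(x)) = x / F(x), where ∇ denotes the Euclidean gradient. -/
/-!
The dual norm `F⁰` satisfies the Fenchel-type inequality `⟪a, b⟫ ≤ F⁰(a) F(b)`. Call `(a, b)` an
equality pair when both sides agree. At such a pair, `z ↦ F⁰(a) F(z) - ⟪a, z⟫` and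
`z ↦ F⁰(z) F(b) - ⟪z, b⟫` attain their minimum value `0` at `b` and at `a` respectively, so by
Fermat's rule `∇F(b) = a / F⁰(a)` and `∇F⁰(a) = b / F(b)` (`gradient_eq_of_isMin`).

It remains to find equality pairs. Given `y ≠ 0`, the supremum defining `F⁰(y)` is attained at
some `b`, by homogeneity and compactness of the unit sphere (`exists_dual_eq`); rescaling `b` to
`b / F(b)` keeps the equality and gives the first identity. Given `x ≠ 0`, the pair `(∇F(x), x)`
is an equality pair with `F⁰(∇F(x)) = 1`, because `⟪∇F(x), z⟫ ≤ F(z)` by subadditivity, with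
equality at `z = x` by Euler's relation.
-/

open scoped RealInnerProductSpace
open MeasureTheory
noncomputable section

/-- Euclidean space `ℝ^{n+1}`. -/
abbrev Euc (n : ℕ) := EuclideanSpace ℝ (Fin (n + 1))

/-- A Minkowski-type norm on `ℝ^{n+1}` with comparison constants `c ≤ C`:
`F 0 = 0`, `F` convex, positively 1-homogeneous and `c‖x‖ ≤ F x ≤ C‖x‖`. -/
structure IsMinkowskiTypeNorm (n : ℕ) (F : Euc n → ℝ) (c C : ℝ) : Prop where
  zero : F 0 = 0
  convexOn : ConvexOn ℝ Set.univ F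
  homog : ∀ l : ℝ, 0 < l → ∀ x : Euc n, F (l • x) = l * F x
  c_pos : 0 < c
  c_le_C : c ≤ C
  lower : ∀ x : Euc n, c * ‖x‖ ≤ F x
  upper : ∀ x : Euc n, F x ≤ C * ‖x‖

/-- The dual norm `F⁰(x) = sup_{y ≠ 0} ⟪x, y⟫ / F(y)`. -/
def dualNorm (n : ℕ) (F : Euc n → ℝ) (x : Euc n) : ℝ :=
  ⨆ y : {y : Euc n // y ≠ 0}, ⟪x, (y : Euc n)⟫ / F (y : Euc n)

/-- A Minkowski norm: a Minkowski-type norm that is smooth away from the origin with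
positive definite Hessian of `F²/2` away from the origin. -/
structure IsMinkowskiNorm (n : ℕ) (F : Euc n → ℝ) (c C : ℝ)
    extends IsMinkowskiTypeNorm n F c C : Prop where
  smooth : ContDiffOn ℝ (⊤ : ℕ∞) F {(0 : Euc n)}ᶜ
  hess_posdef : ∀ x : Euc n, x ≠ 0 → ∀ v : Euc n, v ≠ 0 →
    0 < iteratedFDeriv ℝ 2 (fun y => F y ^ 2 / 2) x ![v, v]

namespace IsMinkowskiTypeNorm

variable {n : ℕ} {F : Euc n → ℝ} {c C : ℝ}

lemma pos (hF : IsMinkowskiTypeNorm n F c C) {x : Euc n} (hx : x ≠ 0) : 0 < F x :=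
  (mul_pos hF.c_pos (norm_pos_iff.2 hx)).trans_le (hF.lower x)

lemma subadd (hF : IsMinkowskiTypeNorm n F c C) (x z : Euc n) : F (x + z) ≤ F x + F z := by
  have h := hF.convexOn.2 (Set.mem_univ ((2 : ℝ) • x)) (Set.mem_univ ((2 : ℝ) • z))
    (show (0 : ℝ) ≤ 1 / 2 by norm_num) (show (0 : ℝ) ≤ 1 / 2 by norm_num) (by norm_num)
  rw [smul_smul, smul_smul, hF.homog 2 two_pos, hF.homog 2 two_pos] at h
  norm_num at h
  linarith

lemma bddAbove (hF : IsMinkowskiTypeNorm n F c C) (a : Euc n) :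
    BddAbove (Set.range fun y : {y : Euc n // y ≠ 0} => ⟪a, (y : Euc n)⟫ / F (y : Euc n)) := by
  refine ⟨‖a‖ / c, ?_⟩
  rintro _ ⟨⟨z, hz⟩, rfl⟩
  have hc := hF.c_pos
  change ⟪a, z⟫ / F z ≤ ‖a‖ / c
  rw [div_le_div_iff₀ (hF.pos hz) hc]
  calc ⟪a, z⟫ * c ≤ (‖a‖ * ‖z‖) * c := by gcongr; exact real_inner_le_norm a z
    _ = ‖a‖ * (c * ‖z‖) := by ring
    _ ≤ ‖a‖ * F z := by gcongr; exact hF.lower z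

/-- The Fenchel-type inequality between `F⁰` and `F`. -/
lemma inner_le (hF : IsMinkowskiTypeNorm n F c C) (a b : Euc n) :
    ⟪a, b⟫ ≤ dualNorm n F a * F b := by
  rcases eq_or_ne b 0 with rfl | hb
  · simp [hF.zero]
  · rw [← div_le_iff₀ (hF.pos hb)]
    exact le_ciSup (hF.bddAbove a) ⟨b, hb⟩

lemma dual_le (hF : IsMinkowskiTypeNorm n F c C) {a : Euc n} {M : ℝ}
    (h : ∀ z, ⟪a, z⟫ ≤ M * F z) : dualNorm n F a ≤ M := by
  have : Nonempty {y : Euc n // y ≠ 0} := by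
    obtain ⟨v, hv⟩ := exists_ne (0 : Euc n)
    exact ⟨⟨v, hv⟩⟩
  refine ciSup_le fun z => ?_
  rw [div_le_iff₀ (hF.pos z.2)]
  exact h z

lemma dual_pos (hF : IsMinkowskiTypeNorm n F c C) {a : Euc n} (ha : a ≠ 0) :
    0 < dualNorm n F a := by
  have h := hF.inner_le a a
  have h1 : 0 < ⟪a, a⟫ := real_inner_self_pos.2 ha
  exact pos_of_mul_pos_left (h1.trans_le h) (hF.pos ha).le

/-- The supremum defining the dual norm is attained. -/
lemma exists_dual_eq (hF : IsMinkowskiTypeNorm n F c C) (hc : ContinuousOn F {(0 : Euc n)}ᶜ)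
    (a : Euc n) : ∃ b : Euc n, b ≠ 0 ∧ ⟪a, b⟫ = dualNorm n F a * F b := by
  have hne : ∀ z ∈ Metric.sphere (0 : Euc n) 1, z ≠ 0 := fun z hz =>
    ne_zero_of_mem_unit_sphere ⟨z, hz⟩
  have hcont : ContinuousOn (fun z : Euc n => ⟪a, z⟫ / F z) (Metric.sphere 0 1) :=
    ContinuousOn.div (by fun_prop) (hc.mono hne) fun z hz => (hF.pos (hne z hz)).ne'
  obtain ⟨b, hb, hmax⟩ := (isCompact_sphere (0 : Euc n) 1).exists_isMaxOn
    (NormedSpace.sphere_nonempty.2 zero_le_one) hcont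
  refine ⟨b, hne b hb, le_antisymm (hF.inner_le a b) ?_⟩
  rw [← le_div_iff₀ (hF.pos (hne b hb))]
  refine hF.dual_le fun z => ?_
  rcases eq_or_ne z 0 with rfl | hz
  · simp [hF.zero]
  -- The quotient `⟪a, z⟫ / F z` is 0-homogeneous, so `z` may be normalized to the sphere.
  have hz' : 0 < ‖z‖⁻¹ := inv_pos.2 (norm_pos_iff.2 hz)
  have h := hmax (show ‖z‖⁻¹ • z ∈ Metric.sphere (0 : Euc n) 1 by
    simp [norm_smul, hz])
  change ⟪a, ‖z‖⁻¹ • z⟫ / F (‖z‖⁻¹ • z) ≤ ⟪a, b⟫ / F b at h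
  rw [hF.homog _ hz', inner_smul_right, mul_div_mul_left _ _ hz'.ne',
    div_le_iff₀ (hF.pos hz)] at h
  exact h

/-- The slopes `(F (x + t z) - F x) / t`, `t > 0`, are bounded by `F z`, hence so is their limit. -/
lemma inner_gradient_le (hF : IsMinkowskiTypeNorm n F c C) {x : Euc n}
    (hd : DifferentiableAt ℝ F x) (z : Euc n) : ⟪gradient F x, z⟫ ≤ F z := by
  have h := (hd.hasGradientAt.hasFDerivAt.hasLineDerivAt z).tendsto_slope_zero_right
  simp only [InnerProductSpace.toDual_apply_apply] at h
  refine le_of_tendsto h ?_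
  filter_upwards [self_mem_nhdsWithin] with t ht
  have ht : 0 < t := ht
  have h1 := hF.subadd x (t • z)
  rw [hF.homog t ht] at h1
  simp only [smul_eq_mul]
  rw [inv_mul_le_iff₀ ht]
  linarith

/-- Euler's relation for 1-homogeneous functions. -/
lemma inner_gradient_self (hF : IsMinkowskiTypeNorm n F c C) {x : Euc n}
    (hd : DifferentiableAt ℝ F x) : ⟪gradient F x, x⟫ = F x := by
  have h := (hd.hasGradientAt.hasFDerivAt.hasLineDerivAt x).tendsto_slope_zero_right
  simp only [InnerProductSpace.toDual_apply_apply] at h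
  refine tendsto_nhds_unique h (tendsto_const_nhds.congr' ?_)
  filter_upwards [self_mem_nhdsWithin] with t ht
  have ht : 0 < t := ht
  have h1 : x + t • x = (1 + t) • x := by rw [add_smul, one_smul]
  simp only [smul_eq_mul]
  rw [h1, hF.homog _ (by linarith)]
  field_simp
  ring

end IsMinkowskiTypeNorm

/-- Fermat's rule for a function touching a linear functional from above. -/
lemma gradient_eq_of_isMin {n : ℕ} {H : Euc n → ℝ} {a b : Euc n} {m : ℝ} (hm : m ≠ 0)
    (hd : DifferentiableAt ℝ H b) (hle : ∀ z, ⟪a, z⟫ ≤ m * H z) (heq : ⟪a, b⟫ = m * H b) :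
    gradient H b = m⁻¹ • a := by
  have hmin : IsLocalMin (fun z => m * H z - innerSL ℝ a z) b := by
    refine Filter.Eventually.of_forall fun z => ?_
    simp only [innerSL_apply_apply]
    linarith [hle z]
  have h0 := hmin.hasFDerivAt_eq_zero
    ((hd.hasGradientAt.hasFDerivAt.const_mul m).sub (innerSL ℝ a).hasFDerivAt)
  rw [eq_inv_smul_iff₀ hm]
  refine ext_inner_right ℝ fun z => ?_
  have h1 := congrArg (fun L => L z) h0
  simp at h1
  rw [inner_smul_left]
  simp
  linarith

/-- For a Minkowski norm `F` with differentiable dual `F⁰`: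
`∇F(∇F⁰(y)) = y / F⁰(y)` and `∇F⁰(∇F(x)) = x / F(x)` for `x, y ≠ 0`. -/
theorem gradient_duality (n : ℕ) (F : Euc n → ℝ) (c C : ℝ)
    (hF : IsMinkowskiNorm n F c C)
    (hdual : ∀ y : Euc n, y ≠ 0 → DifferentiableAt ℝ (dualNorm n F) y)
    (x y : Euc n) (hx : x ≠ 0) (hy : y ≠ 0) :
    gradient F (gradient (dualNorm n F) y) = (dualNorm n F y)⁻¹ • y ∧
    gradient (dualNorm n F) (gradient F x) = (F x)⁻¹ • x := by
  have hT := hF.toIsMinkowskiTypeNorm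
  have hdF : ∀ z : Euc n, z ≠ 0 → DifferentiableAt ℝ F z := fun z hz =>
    (hF.smooth.contDiffAt (isOpen_compl_singleton.mem_nhds hz)).differentiableAt (by simp)
  -- Fermat's rule applied to `F⁰` at an equality pair `(a, b)`.
  have key : ∀ a b : Euc n, a ≠ 0 → b ≠ 0 → ⟪a, b⟫ = dualNorm n F a * F b →
      gradient (dualNorm n F) a = (F b)⁻¹ • b := fun a b ha hb h =>
    gradient_eq_of_isMin (hT.pos hb).ne' (hdual a ha)
      (fun z => by rw [real_inner_comm, mul_comm]; exact hT.inner_le z b)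
      (by rw [real_inner_comm, mul_comm]; exact h)
  constructor
  · obtain ⟨b, hb, h⟩ := hT.exists_dual_eq hF.smooth.continuousOn y
    have hb' : 0 < (F b)⁻¹ := inv_pos.2 (hT.pos hb)
    rw [key y b hy hb h]
    refine gradient_eq_of_isMin (hT.dual_pos hy).ne' (hdF _ (smul_ne_zero hb'.ne' hb))
      (hT.inner_le y) ?_
    rw [inner_smul_right, hT.homog _ hb', h]
    ring
  · have he := hT.inner_gradient_self (hdF x hx)
    have hpos := hT.pos hx
    have hg : gradient F x ≠ 0 := by
      intro h0
      rw [h0, inner_zero_left] at he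
      linarith
    have h1 : dualNorm n F (gradient F x) = 1 := by
      refine le_antisymm (hT.dual_le fun z => ?_) ?_
      · rw [one_mul]; exact hT.inner_gradient_le (hdF x hx) z
      · have h2 := hT.inner_le (gradient F x) x
        rw [he] at h2
        exact le_of_mul_le_mul_right (by linarith) hpos
    exact key _ x hg hx (by rw [h1, he, one_mul])
end
end

section
/- Equality case of the anisotropic Cauchy–Schwarz inequality: let F be a Minkowski norm on ℝ^{n+1} with dual F⁰, and assume F⁰ is differentiable on ℝ^{n+1}∖{0}. Then for x ≠ 0 and y ≠ 0, equality ⟪x, y⟫ = F(x) · F⁰(y) holds if and only if y = F⁰(y) · ∇F(x), which holds if and only if x = F(x) · ∇F⁰(y). -/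
/-!
The inequality `⟪z, w⟫ ≤ F z * F⁰ w` holds for all `z, w`. If equality holds at `(x, y)`, then `x`
maximizes `z ↦ ⟪z, y⟫ - F z * F⁰ y` and `y` maximizes `w ↦ ⟪x, w⟫ - F x * F⁰ w`, so both gradients
vanish there; these are the two gradient identities. Conversely, pairing either identity with `x`
(resp. `y`) and using the Euler relation `⟪∇f p, p⟫ = f p` for the positively 1-homogeneous functions
`F` and `F⁰` gives equality back. The two halves are symmetric, and both are instances of
`inner_eq_iff_eq_smul_gradient`.
-/

open scoped RealInnerProductSpace
open MeasureTheory
noncomputable section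

/-- The Euler relation for positively 1-homogeneous functions. -/
lemma inner_gradient_of_homog {n : ℕ} {f : Euc n → ℝ} {p : Euc n}
    (hf : DifferentiableAt ℝ f p)
    (hom : ∀ l : ℝ, 0 < l → ∀ z : Euc n, f (l • z) = l * f z) :
    ⟪gradient f p, p⟫ = f p := by
  have hg : HasFDerivAt f (fderiv ℝ f p) ((1 : ℝ) • p) := by
    rw [one_smul]; exact hf.hasFDerivAt
  have h1 : HasDerivAt (fun t : ℝ => f (t • p)) (fderiv ℝ f p ((1 : ℝ) • p)) 1 :=
    hg.comp_hasDerivAt (1 : ℝ) ((hasDerivAt_id (1 : ℝ)).smul_const p)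
  have h2 : HasDerivAt (fun t : ℝ => f (t • p)) (1 * f p) 1 := by
    refine ((hasDerivAt_id (1 : ℝ)).mul_const (f p)).congr_of_eventuallyEq ?_
    filter_upwards [lt_mem_nhds (zero_lt_one' ℝ)] with t ht
    exact hom t ht p
  have h3 := h1.unique h2
  rw [one_smul, one_mul] at h3
  rw [gradient, InnerProductSpace.toDual_symm_apply, h3]

/-- Equality at `p` in a global bound `⟪z, a⟫ ≤ f z * k`, with `f` positively 1-homogeneous, is
equivalent to the first-order condition at `p`. -/
lemma inner_eq_iff_eq_smul_gradient {n : ℕ} {f : Euc n → ℝ} {p a : Euc n} {k : ℝ}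
    (hf : DifferentiableAt ℝ f p)
    (hom : ∀ l : ℝ, 0 < l → ∀ z : Euc n, f (l • z) = l * f z)
    (hle : ∀ z : Euc n, ⟪z, a⟫ ≤ f z * k) :
    ⟪p, a⟫ = f p * k ↔ a = k • gradient f p := by
  constructor
  · intro h
    have hmax : IsLocalMax (fun z : Euc n => ⟪a, z⟫ - k * f z) p := by
      refine Filter.Eventually.of_forall fun z => ?_
      have hz := hle z
      simp only [real_inner_comm z a, real_inner_comm p a]
      linarith
    have hd : HasFDerivAt (fun z : Euc n => ⟪a, z⟫ - k * f z)
        (innerSL ℝ a - k • fderiv ℝ f p) p :=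
      (innerSL ℝ a).hasFDerivAt.sub (hf.hasFDerivAt.const_mul k)
    have h0 := hmax.hasFDerivAt_eq_zero hd
    refine ext_inner_right ℝ fun v => ?_
    have hv := congrArg (fun L => L v) h0
    simp only [sub_apply, smul_apply,
      innerSL_apply_apply, zero_apply, smul_eq_mul] at hv
    rw [real_inner_smul_left, gradient, InnerProductSpace.toDual_symm_apply]
    linarith
  · intro h
    rw [real_inner_comm, h, real_inner_smul_left, inner_gradient_of_homog hf hom, mul_comm]

/-- The anisotropic Cauchy–Schwarz inequality; the lower bound `c * ‖z‖ ≤ F z` makes the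
supremum defining the dual norm finite. -/
lemma IsMinkowskiTypeNorm.inner_le_s5 {n : ℕ} {F : Euc n → ℝ} {c C : ℝ}
    (hF : IsMinkowskiTypeNorm n F c C) (z w : Euc n) :
    ⟪z, w⟫ ≤ F z * dualNorm n F w := by
  have hpos : ∀ u : Euc n, u ≠ 0 → 0 < F u := fun u hu =>
    (mul_pos hF.c_pos (norm_pos_iff.2 hu)).trans_le (hF.lower u)
  by_cases hz : z = 0
  · simp [hz, hF.zero]
  have hb : BddAbove (Set.range fun u : {u : Euc n // u ≠ 0} => ⟪w, (u : Euc n)⟫ / F u) := by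
    refine ⟨‖w‖ / c, ?_⟩
    rintro _ ⟨u, rfl⟩
    have hc := hF.c_pos
    rw [div_le_div_iff₀ (hpos u u.2) hc]
    calc ⟪w, (u : Euc n)⟫ * c ≤ ‖w‖ * ‖(u : Euc n)‖ * c := by
          gcongr; exact real_inner_le_norm _ _
      _ = ‖w‖ * (c * ‖(u : Euc n)‖) := by ring
      _ ≤ ‖w‖ * F u := by gcongr; exact hF.lower u
  have h : ⟪w, z⟫ / F z ≤ dualNorm n F w := le_ciSup hb ⟨z, hz⟩
  rw [div_le_iff₀ (hpos z hz)] at h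
  rw [real_inner_comm, mul_comm]
  exact h

lemma dualNorm_smul {n : ℕ} (F : Euc n → ℝ) (l : ℝ) (hl : 0 < l) (w : Euc n) :
    dualNorm n F (l • w) = l * dualNorm n F w := by
  simp only [dualNorm, Real.mul_iSup_of_nonneg hl.le, real_inner_smul_left, mul_div_assoc]

/-- Equality case of the anisotropic Cauchy–Schwarz inequality: for `x, y ≠ 0`,
`⟪x, y⟫ = F(x)·F⁰(y)` iff `y = F⁰(y)·∇F(x)` iff `x = F(x)·∇F⁰(y)`. -/
theorem anisotropic_cauchy_schwarz_eq_iff (n : ℕ) (F : Euc n → ℝ) (c C : ℝ)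
    (hF : IsMinkowskiNorm n F c C)
    (hdual : ∀ y : Euc n, y ≠ 0 → DifferentiableAt ℝ (dualNorm n F) y)
    (x y : Euc n) (hx : x ≠ 0) (hy : y ≠ 0) :
    (⟪x, y⟫ = F x * dualNorm n F y ↔ y = dualNorm n F y • gradient F x) ∧
    (y = dualNorm n F y • gradient F x ↔ x = F x • gradient (dualNorm n F) y) := by
  have hFx : DifferentiableAt ℝ F x :=
    (hF.smooth.contDiffAt (isOpen_compl_singleton.mem_nhds hx)).differentiableAt (by simp)
  have h1 : ⟪x, y⟫ = F x * dualNorm n F y ↔ y = dualNorm n F y • gradient F x :=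
    inner_eq_iff_eq_smul_gradient hFx hF.homog fun z => hF.inner_le_s5 z y
  have h2 : ⟪y, x⟫ = dualNorm n F y * F x ↔ x = F x • gradient (dualNorm n F) y :=
    inner_eq_iff_eq_smul_gradient (hdual y hy) (dualNorm_smul F) fun w => by
      rw [real_inner_comm, mul_comm]
      exact hF.inner_le_s5 x w
  rw [real_inner_comm, mul_comm] at h2
  exact ⟨h1, h1.symm.trans h2⟩
end
end

section
/- Real-inequality reduction from the weighted inequality to the p-momentum inequality: let n ≥ 1 be a natural number, let p ≥ 1 and V_L, S, V, X, I be positive reals. Suppose X ≥ (n/(n+1)^{1+1/n}) · V_L^{-1/n} · S^{1+1/n} + V and I^{1/p} · S^{1−1/p} ≥ X. Then I ≥ V_L^{−p/(n+1)} · S · V^{p/(n+1)}. -/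
/-!
Write `A` for the first summand of the lower bound on `X`. Weighted AM-GM with weights
`n/(n+1)` and `1/(n+1)`, applied to `A(n+1)/n` and `(n+1)V`, gives
`A + V ≥ VL^(-1/(n+1)) * S * V^(1/(n+1))`: the powers of `n+1` cancel, which is what the constant
`n/(n+1)^(1+1/n)` is for. Combined with `X ≤ I^(1/p) * S^(1-1/p)`, raising to the power `p` and
dividing by `S^(p-1)` gives the claim. After AM-GM the argument runs in logarithms, where these
manipulations are linear.
-/

/-- The logarithmic form of `VL^(-1/(n+1)) * S * V^(1/(n+1)) ≤ X`. -/
lemma log_lower_bound (n : ℕ) (hn : 1 ≤ n) (VL S V X : ℝ)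
    (hVL : 0 < VL) (hS : 0 < S) (hV : 0 < V)
    (h1 : (n / ((n + 1 : ℝ) ^ (1 + 1 / (n : ℝ)))) * VL ^ (-(1 / (n : ℝ))) *
        S ^ (1 + 1 / (n : ℝ)) + V ≤ X) :
    Real.log S + (Real.log V - Real.log VL) / (n + 1 : ℝ) ≤ Real.log X := by
  have hn0 : (0 : ℝ) < n := by exact_mod_cast hn
  have hm : (0 : ℝ) < n + 1 := by positivity
  -- `B = A(n+1)/n`, in the notation of the module comment.
  set B : ℝ := (n + 1 : ℝ) ^ (-(1 / (n : ℝ))) * VL ^ (-(1 / (n : ℝ))) *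
    S ^ (1 + 1 / (n : ℝ)) with hB
  have hBpos : 0 < B := by positivity
  have hA : (n / ((n + 1 : ℝ) ^ (1 + 1 / (n : ℝ)))) * VL ^ (-(1 / (n : ℝ))) *
      S ^ (1 + 1 / (n : ℝ)) = n / (n + 1 : ℝ) * B := by
    rw [hB, Real.rpow_add hm, Real.rpow_one, Real.rpow_neg hm.le]
    field_simp
  have amgm := Real.geom_mean_le_arith_mean2_weighted
    (w₁ := n / (n + 1 : ℝ)) (w₂ := 1 / (n + 1 : ℝ)) (p₁ := B) (p₂ := (n + 1 : ℝ) * V)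
    (by positivity) (by positivity) hBpos.le (by positivity) (by field_simp)
  have hV' : 1 / (n + 1 : ℝ) * ((n + 1 : ℝ) * V) = V := by field_simp
  rw [hV', ← hA] at amgm
  have hlog := Real.log_le_log (by positivity) (amgm.trans h1)
  have hlogB : Real.log B = -(1 / (n : ℝ)) * Real.log (n + 1 : ℝ) +
      -(1 / (n : ℝ)) * Real.log VL + (1 + 1 / (n : ℝ)) * Real.log S := by
    rw [hB, Real.log_mul (by positivity) (by positivity),
      Real.log_mul (by positivity) (by positivity),
      Real.log_rpow hm, Real.log_rpow hVL, Real.log_rpow hS]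
  rw [Real.log_mul (by positivity) (by positivity), Real.log_rpow hBpos,
    Real.log_rpow (by positivity), Real.log_mul hm.ne' hV.ne', hlogB] at hlog
  refine le_of_eq_of_le ?_ hlog
  field_simp
  ring

/-- Real-inequality reduction from the weighted inequality to the `p`-momentum inequality. -/
theorem p_momentum_reduction (n : ℕ) (hn : 1 ≤ n) (p VL S V X I : ℝ)
    (hp : 1 ≤ p) (hVL : 0 < VL) (hS : 0 < S) (hV : 0 < V) (hX : 0 < X) (hI : 0 < I)
    (h1 : (n / ((n + 1 : ℝ) ^ (1 + 1 / (n : ℝ)))) * VL ^ (-(1 / (n : ℝ))) *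
        S ^ (1 + 1 / (n : ℝ)) + V ≤ X)
    (h2 : X ≤ I ^ (1 / p) * S ^ (1 - 1 / p)) :
    VL ^ (-(p / (n + 1 : ℝ))) * S * V ^ (p / (n + 1 : ℝ)) ≤ I := by
  have hp0 : 0 < p := by linarith
  have hlow := log_lower_bound n hn VL S V X hVL hS hV h1
  have hup := Real.log_le_log hX h2
  rw [Real.log_mul (by positivity) (by positivity), Real.log_rpow hI, Real.log_rpow hS] at hup
  have key := mul_le_mul_of_nonneg_left (hlow.trans hup) hp0.le
  have hr : p * (1 / p * Real.log I + (1 - 1 / p) * Real.log S) =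
      Real.log I + (p - 1) * Real.log S := by
    field_simp
  rw [hr] at key
  rw [← Real.log_le_log_iff (by positivity) hI, Real.log_mul (by positivity) (by positivity),
    Real.log_mul (by positivity) hS.ne', Real.log_rpow hVL, Real.log_rpow hV]
  have hl : p * (Real.log S + (Real.log V - Real.log VL) / (n + 1 : ℝ)) =
      p * Real.log S + p / (n + 1 : ℝ) * Real.log V - p / (n + 1 : ℝ) * Real.log VL := by
    ring
  linarith
end

section
/- Quantitative strict convexity of a Minkowski norm on its unit level set: let F be a Minkowski norm on ℝ^{n+1} and let M > 0. Then there exists a constant C > 0 such that for every z ∈ ℝ^{n+1} with F(z) = 1 and every v ∈ ℝ^{n+1} with DF(z)[v] = 0 and ‖v‖ ≤ M, one has F(z + v) ≥ 1 + C‖v‖². -/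
/-!
The square `G = F² / 2` is uniformly convex on compact sets avoiding the origin: its Hessian is
continuous and positive definite there, so it is bounded below by `m ‖v‖²`
(`IsMinkowskiNorm.exists_hess_lower_bound`). If `F z = 1` and `DF(z)[v] = 0`, convexity of `F` gives
`F (z + t v) ≥ 1` for `t ≥ 0` (`IsMinkowskiNorm.one_le_of_tangent`), so for `‖v‖ ≤ M` the segment from
`z` to `z + v` stays in the annulus `1 / C ≤ ‖x‖ ≤ 1 / c + M`. There `t ↦ G (z + t v)` has vanishing
derivative at `0` and second derivative at least `m ‖v‖²`, whence `F (z + v)² ≥ 1 + m ‖v‖²`.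
Taking the square root costs only a constant, because `‖v‖ ≤ M`.
-/

open scoped RealInnerProductSpace
open MeasureTheory
noncomputable section

namespace IsMinkowskiNorm

variable {n : ℕ} {F : Euc n → ℝ} {c C : ℝ}

lemma contDiffAt (hF : IsMinkowskiNorm n F c C) {x : Euc n} (hx : x ≠ 0) :
    ContDiffAt ℝ (⊤ : ℕ∞) F x :=
  hF.smooth.contDiffAt (isOpen_compl_singleton.mem_nhds hx)

lemma contDiffAt_half_sq (hF : IsMinkowskiNorm n F c C) {x : Euc n} (hx : x ≠ 0) :
    ContDiffAt ℝ (⊤ : ℕ∞) (fun y => F y ^ 2 / 2) x :=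
  ((hF.contDiffAt hx).pow 2).div_const 2

lemma contDiffAt_fderiv_half_sq (hF : IsMinkowskiNorm n F c C) {x : Euc n} (hx : x ≠ 0) :
    ContDiffAt ℝ 1 (fderiv ℝ (fun y => F y ^ 2 / 2)) x :=
  (hF.contDiffAt_half_sq hx).fderiv_right (by norm_cast)

lemma ne_zero_of_one_le (hF : IsMinkowskiNorm n F c C) {x : Euc n} (hx : 1 ≤ F x) : x ≠ 0 := by
  rintro rfl
  rw [hF.zero] at hx
  linarith

/-- The Hessian of `F² / 2` is uniformly positive definite on compact sets avoiding the origin,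
by compactness of `K × sphere` and homogeneity in the direction `v`. -/
lemma exists_hess_lower_bound (hF : IsMinkowskiNorm n F c C) {K : Set (Euc n)}
    (hK : IsCompact K) (hK0 : ∀ x ∈ K, x ≠ 0) :
    ∃ m : ℝ, 0 < m ∧ ∀ x ∈ K, ∀ v : Euc n,
      m * ‖v‖ ^ 2 ≤ fderiv ℝ (fderiv ℝ (fun y => F y ^ 2 / 2)) x v v := by
  have hcont : ContinuousOn
      (fun p : Euc n × Euc n => fderiv ℝ (fderiv ℝ (fun y => F y ^ 2 / 2)) p.1 p.2 p.2)
      (K ×ˢ Metric.sphere (0 : Euc n) 1) := by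
    have h1 : ContinuousOn (fderiv ℝ (fderiv ℝ (fun y => F y ^ 2 / 2))) K := fun x hx =>
      (((hF.contDiffAt_fderiv_half_sq (hK0 x hx)).fderiv_right (m := 0)
        (by norm_num)).continuousAt).continuousWithinAt
    have h2 := h1.comp (continuousOn_fst (s := K ×ˢ Metric.sphere (0 : Euc n) 1))
      (fun p hp => hp.1)
    exact (h2.clm_apply continuousOn_snd).clm_apply continuousOn_snd
  obtain ⟨m, hm, hle⟩ := (hK.prod (isCompact_sphere (0 : Euc n) 1)).exists_forall_le' hcont
    (a := 0) (by
      rintro ⟨x, v⟩ ⟨hx, hv⟩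
      have hv0 : v ≠ 0 := ne_zero_of_mem_unit_sphere ⟨v, hv⟩
      simpa [iteratedFDeriv_two_apply] using hF.hess_posdef x (hK0 x hx) v hv0)
  refine ⟨m, hm, fun x hx v => ?_⟩
  rcases eq_or_ne v 0 with rfl | hv
  · simp
  have hv' : ‖v‖ ≠ 0 := norm_ne_zero_iff.mpr hv
  have h := hle (x, ‖v‖⁻¹ • v) ⟨hx, by simp [norm_smul, hv']⟩
  simp only [map_smul, smul_eq_mul, smul_apply] at h
  calc m * ‖v‖ ^ 2 ≤ (‖v‖⁻¹ * (‖v‖⁻¹ *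
        fderiv ℝ (fderiv ℝ (fun y => F y ^ 2 / 2)) x v v)) * ‖v‖ ^ 2 := by gcongr
    _ = _ := by field_simp

lemma hasDerivAt_line (z v : Euc n) (t : ℝ) : HasDerivAt (fun s : ℝ => z + s • v) v t := by
  simpa using ((hasDerivAt_id t).smul_const v).const_add z

/-- By convexity, moving tangentially to the level set `F = 1` does not
decrease `F`. -/
lemma one_le_of_tangent (hF : IsMinkowskiNorm n F c C) {z v : Euc n} (hz : F z = 1)
    (hv : fderiv ℝ F z v = 0) {t : ℝ} (ht : 0 ≤ t) : 1 ≤ F (z + t • v) := by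
  rcases ht.eq_or_lt with rfl | ht
  · simp [hz]
  have hz0 : z ≠ 0 := hF.ne_zero_of_one_le hz.ge
  have hconv : ConvexOn ℝ Set.univ (fun s : ℝ => F (z + s • v)) := by
    refine ⟨convex_univ, fun a _ b _ p q hp hq hpq => ?_⟩
    have h := hF.convexOn.2 (Set.mem_univ (z + a • v)) (Set.mem_univ (z + b • v)) hp hq hpq
    have e : p • (z + a • v) + q • (z + b • v) = z + (p • a + q • b) • v := by
      obtain rfl : q = 1 - p := by linarith
      simp only [smul_eq_mul]
      module
    rwa [e] at h
  have hd : HasDerivAt (fun s : ℝ => F (z + s • v)) 0 0 := by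
    have h1 : HasFDerivAt F (fderiv ℝ F z) (z + (0 : ℝ) • v) := by
      simpa using ((hF.contDiffAt hz0).differentiableAt (by simp)).hasFDerivAt
    simpa [hv, Function.comp_def] using h1.comp_hasDerivAt (0 : ℝ) (hasDerivAt_line z v 0)
  have h := hconv.le_slope_of_hasDerivAt (Set.mem_univ 0) (Set.mem_univ t) ht hd
  rw [slope_def_field, le_div_iff₀ (by linarith)] at h
  simp only [zero_smul, add_zero, hz] at h
  linarith

end IsMinkowskiNorm

/-- Quantitative strict convexity of a Minkowski norm on its unit level set:
there is `C' > 0` so that `F(z + v) ≥ 1 + C'‖v‖²` whenever `F(z) = 1`,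
`DF(z)[v] = 0` and `‖v‖ ≤ M`. -/
theorem minkowski_norm_quantitative_convexity (n : ℕ) (F : Euc n → ℝ) (c C : ℝ)
    (hF : IsMinkowskiNorm n F c C) (M : ℝ) (hM : 0 < M) :
    ∃ C' : ℝ, 0 < C' ∧ ∀ z : Euc n, F z = 1 → ∀ v : Euc n,
      fderiv ℝ F z v = 0 → ‖v‖ ≤ M → 1 + C' * ‖v‖ ^ 2 ≤ F (z + v) := by
  have hc := hF.c_pos
  have hC : 0 < C := hc.trans_le hF.c_le_C
  set K : Set (Euc n) := Metric.closedBall 0 (1 / c + M) ∩ {x | 1 / C ≤ ‖x‖} with hKdef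
  have hK : IsCompact K :=
    (isCompact_closedBall _ _).inter_right (isClosed_le continuous_const continuous_norm)
  have hK0 : ∀ x ∈ K, x ≠ 0 := by
    rintro x ⟨-, hx⟩ rfl
    have : 0 < 1 / C := by positivity
    simp only [Set.mem_ofPred_eq, norm_zero] at hx
    linarith
  obtain ⟨m, hm, hle⟩ := hF.exists_hess_lower_bound hK hK0
  -- With `s = ‖v‖² ≤ M²`, this choice gives `(1 + C' s)² ≤ 1 + C' (2 + M²) s ≤ 1 + m s`.
  refine ⟨min 1 (m / (2 + M ^ 2)), by positivity, fun z hz v hv hvM => ?_⟩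
  have hseg : ∀ t ∈ Set.Icc (0 : ℝ) 1, z + t • v ∈ K := by
    rintro t ⟨ht0, ht1⟩
    have h1 := hF.one_le_of_tangent hz hv ht0
    refine ⟨?_, ?_⟩
    · have hzn : ‖z‖ ≤ 1 / c := by
        rw [le_div_iff₀ hc, mul_comm]
        exact (hF.lower z).trans hz.le
      have htv : ‖t • v‖ ≤ M := by
        rw [norm_smul, Real.norm_of_nonneg ht0]
        nlinarith [norm_nonneg v]
      rw [mem_closedBall_zero_iff]
      exact (norm_add_le _ _).trans (add_le_add hzn htv)
    · simp only [Set.mem_ofPred_eq]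
      rw [div_le_iff₀ hC, mul_comm]
      exact h1.trans (hF.upper _)
  set G : Euc n → ℝ := fun y => F y ^ 2 / 2 with hG
  set a : ℝ := m * ‖v‖ ^ 2 with ha
  have hd1 : ∀ t ∈ Set.Icc (0 : ℝ) 1, HasDerivAt (fun s : ℝ => G (z + s • v) - a / 2 * s ^ 2)
      (fderiv ℝ G (z + t • v) v - a * t) t := by
    intro t ht
    have h1 := (((hF.contDiffAt_half_sq (hK0 _ (hseg t ht))).differentiableAt
      (by simp)).hasFDerivAt).comp_hasDerivAt t (IsMinkowskiNorm.hasDerivAt_line z v t)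
    refine (h1.sub ((hasDerivAt_pow 2 t).const_mul (a / 2))).congr_deriv ?_
    simp only [hG]
    ring
  have hd2 : ∀ t ∈ Set.Icc (0 : ℝ) 1, HasDerivAt (fun s : ℝ => fderiv ℝ G (z + s • v) v - a * s)
      (fderiv ℝ (fderiv ℝ G) (z + t • v) v v - a) t := by
    intro t ht
    have h1 := (((hF.contDiffAt_fderiv_half_sq (hK0 _ (hseg t ht))).differentiableAt
      (by simp)).hasFDerivAt).comp_hasDerivAt t (IsMinkowskiNorm.hasDerivAt_line z v t)
    have h2 := h1.clm_apply (hasDerivAt_const t v)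
    refine (h2.sub ((hasDerivAt_id t).const_mul a)).congr_deriv ?_
    simp [hG]
  have hconv : ConvexOn ℝ (Set.Icc (0 : ℝ) 1) (fun s : ℝ => G (z + s • v) - a / 2 * s ^ 2) := by
    refine convexOn_of_hasDerivWithinAt2_nonneg (convex_Icc 0 1)
      (fun t ht => (hd1 t ht).continuousAt.continuousWithinAt)
      (fun t ht => (hd1 t (interior_subset ht)).hasDerivWithinAt)
      (fun t ht => (hd2 t (interior_subset ht)).hasDerivWithinAt)
      (fun t ht => ?_)
    exact sub_nonneg.mpr (hle _ (hseg t (interior_subset ht)) v)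
  have hG0 : fderiv ℝ G z v = 0 := by
    have hFz := ((hF.contDiffAt (hF.ne_zero_of_one_le hz.ge)).differentiableAt
      (by simp)).hasFDerivAt
    have h := ((hFz.pow 2).mul_const (1 / 2 : ℝ)).fderiv
    have e : G = fun y => F y ^ 2 * (1 / 2) := by
      funext y
      simp only [hG]
      ring
    rw [e, h]
    simp [hv]
  have h0 : (0 : ℝ) ∈ Set.Icc (0 : ℝ) 1 := by simp
  have h1 : (1 : ℝ) ∈ Set.Icc (0 : ℝ) 1 := by simp
  have hs := hconv.le_slope_of_hasDerivAt h0 h1 one_pos (hd1 0 h0)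
  have hsq : 1 + m * ‖v‖ ^ 2 ≤ F (z + v) ^ 2 := by
    rw [slope_def_field] at hs
    simp only [zero_smul, add_zero, hG0] at hs
    simp [hG, hz] at hs
    linarith
  have hF1 : 1 ≤ F (z + v) := by
    simpa using hF.one_le_of_tangent hz hv zero_le_one
  set C' := min 1 (m / (2 + M ^ 2))
  have hC0 : 0 < C' := by positivity
  have hC1 : C' ≤ 1 := min_le_left _ _
  have hCm : C' * (2 + M ^ 2) ≤ m := by
    rw [← le_div_iff₀ (by positivity)]
    exact min_le_right _ _
  have hvM2 : ‖v‖ ^ 2 ≤ M ^ 2 := by gcongr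
  refine (sq_le_sq₀ (by positivity) (by linarith)).mp ?_
  calc (1 + C' * ‖v‖ ^ 2) ^ 2 = 1 + C' * (2 + C' * ‖v‖ ^ 2) * ‖v‖ ^ 2 := by ring
    _ ≤ 1 + C' * (2 + 1 * M ^ 2) * ‖v‖ ^ 2 := by gcongr
    _ ≤ 1 + m * ‖v‖ ^ 2 := by rw [one_mul]; gcongr
    _ ≤ F (z + v) ^ 2 := hsq
end
end
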